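/- arXiv:1512.03255 — 2 statements merged into one kernel-verified Lean document; each statement's English description precedes it below -/
import Mathlib

section
/- (q-Genocchi α,β lemma.) Let A_q(t) = Σ_{n≥0} G_{n,q} t^n/[n]_q! (so that A_q(t)·(e_q(t)+1) = 2t), and define (α_n), (β_n) by t·(D_q A_q)(t) = (Σ α_n t^n/[n]_q!)·A_q(qt) and A_q(t) = (Σ β_n t^n/[n]_q!)·A_q(qt) in K[[t]] (these divisions are well defined and the α_n, β_n unique because A_q(qt) = qt·u(t) with u(t) a unit of K[[t]], and both t·(D_q A_q)(t) and A_q(t) are divisible by t). Then α_0 = 1/q and α_n = −(1/(2q)) Σ_{k=0}^{n} [n choose k]_q G_{k,q} for all n ≥ 1; in particular α_1 = −1/(2q) and α_n = G_{n,q}/(2q) for n ≥ 2. Moreover β_0 = 1/q and β_n = ((q−1)/(2q)) Σ_{k=0}^{n} [n choose k]_q G_{k,q} for all n ≥ 1; in particular β_1 = (q−1)/(2q) and β_n = −((q−1)/(2q)) G_{n,q} for n ≥ 2. -/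
noncomputable section

open Finset MvPolynomial

/-- The `q`-integer `[n]_q = 1 + q + ⋯ + q^(n-1)`. -/
def qInt {K : Type*} [Field K] (q : K) (n : ℕ) : K := ∑ i ∈ Finset.range n, q ^ i

/-- The `q`-factorial `[n]_q! = [1]_q [2]_q ⋯ [n]_q`. -/
def qFact {K : Type*} [Field K] (q : K) (n : ℕ) : K := ∏ k ∈ Finset.range n, qInt q (k + 1)

/-- The `q`-binomial coefficient `[n choose k]_q`. -/
def qChoose {K : Type*} [Field K] (q : K) (n k : ℕ) : K :=
  qFact q n / (qFact q k * qFact q (n - k))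

/-- The partial `q`-derivative in the variable `v` (v = 0 is `x`, v = 1 is `y`),
the linear operator determined by `D_{q,x}(x^m y^l) = [m]_q x^(m-1) y^l` and
`D_{q,y}(x^m y^l) = [l]_q x^m y^(l-1)`. -/
def qDeriv {K : Type*} [Field K] (q : K) (v : Fin 2) (P : MvPolynomial (Fin 2) K) :
    MvPolynomial (Fin 2) K :=
  ∑ m ∈ P.support, monomial (m - Finsupp.single v 1) (P.coeff m * qInt q (m v))

/-- Substitution `x ↦ c·x` in a polynomial in the two variables `x = X 0`, `y = X 1`. -/
def substX {K : Type*} [Field K] (c : K) (P : MvPolynomial (Fin 2) K) :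
    MvPolynomial (Fin 2) K :=
  aeval (fun i : Fin 2 => if i = 0 then C c * X 0 else X 1) P

/-- Substitution `y ↦ c·y` in a polynomial in the two variables `x = X 0`, `y = X 1`. -/
def substY {K : Type*} [Field K] (c : K) (P : MvPolynomial (Fin 2) K) :
    MvPolynomial (Fin 2) K :=
  aeval (fun i : Fin 2 => if i = 0 then X 0 else C c * X 1) P

/-- The 2D `q`-Appell polynomials attached to a coefficient sequence `a`:
`A_{n,q}(x,y) = Σ_{i+j+k=n} ([n]_q!/([i]_q![j]_q![k]_q!)) a_i q^(k(k-1)/2) x^j y^k`. -/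
def appell {K : Type*} [Field K] (q : K) (a : ℕ → K) (n : ℕ) : MvPolynomial (Fin 2) K :=
  ∑ i ∈ Finset.range (n + 1), ∑ j ∈ Finset.range (n + 1 - i),
    monomial (Finsupp.single (0 : Fin 2) j + Finsupp.single (1 : Fin 2) (n - i - j))
      (qFact q n / (qFact q i * qFact q j * qFact q (n - i - j)) * a i *
        q ^ ((n - i - j) * (n - i - j - 1) / 2))

theorem qFact_ne_aux {K : Type*} [Field K] (q : K)
    (hq : ∀ n : ℕ, 1 ≤ n → qInt q n ≠ 0) (n : ℕ) : qFact q n ≠ 0 :=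
  Finset.prod_ne_zero_iff.mpr fun k _ => hq (k + 1) (by omega)

theorem qFact_succ_aux {K : Type*} [Field K] (q : K) (n : ℕ) :
    qFact q (n + 1) = qFact q n * qInt q (n + 1) := by
  simp [qFact, Finset.prod_range_succ]

theorem qInt_mul_aux {K : Type*} [Field K] (q : K) (n : ℕ) :
    (q - 1) * qInt q n = q ^ n - 1 := by
  rw [qInt, mul_geom_sum]

theorem coeff_AE_aux {K : Type*} [Field K] (q : K)
    (hq : ∀ n : ℕ, 1 ≤ n → qInt q n ≠ 0) (G : ℕ → K) (n : ℕ) :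
    PowerSeries.coeff n (PowerSeries.mk (fun n => G n / qFact q n) *
      PowerSeries.mk (fun n => 1 / qFact q n)) =
    (∑ k ∈ Finset.range (n + 1), qChoose q n k * G k) / qFact q n := by
  rw [PowerSeries.coeff_mul, Finset.Nat.sum_antidiagonal_eq_sum_range_succ_mk, Finset.sum_div]
  refine Finset.sum_congr rfl fun k _ => ?_
  have h1 := qFact_ne_aux q hq n
  have h2 := qFact_ne_aux q hq k
  have h3 := qFact_ne_aux q hq (n - k)
  simp only [PowerSeries.coeff_mk, qChoose]
  field_simp

/-- `q`-Genocchi `α`, `β` lemma. -/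
theorem qGenocchi_alpha_beta
    {K : Type*} [Field K] [CharZero K] (q : K) (hq0 : q ≠ 0) (hq1 : q ≠ 1)
    (hq : ∀ n : ℕ, 1 ≤ n → qInt q n ≠ 0)
    (G : ℕ → K) (hG0 : G 0 = 0) (hG1 : G 1 = 1)
    (hG : ∀ n : ℕ, 2 ≤ n → G n + ∑ k ∈ Finset.range (n + 1), qChoose q n k * G k = 0)
    (α β : ℕ → K)
    (hα : PowerSeries.mk (fun n => if n = 0 then (0 : K) else G n / qFact q (n - 1)) =
      PowerSeries.mk (fun n => α n / qFact q n) *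
        PowerSeries.mk (fun n => G n * q ^ n / qFact q n))
    (hβ : PowerSeries.mk (fun n => G n / qFact q n) =
      PowerSeries.mk (fun n => β n / qFact q n) *
        PowerSeries.mk (fun n => G n * q ^ n / qFact q n)) :
    α 0 = 1 / q ∧
    (∀ n : ℕ, 1 ≤ n →
      α n = -(1 / (2 * q)) * ∑ k ∈ Finset.range (n + 1), qChoose q n k * G k) ∧
    α 1 = -(1 / (2 * q)) ∧
    (∀ n : ℕ, 2 ≤ n → α n = G n / (2 * q)) ∧
    β 0 = 1 / q ∧
    (∀ n : ℕ, 1 ≤ n →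
      β n = ((q - 1) / (2 * q)) * ∑ k ∈ Finset.range (n + 1), qChoose q n k * G k) ∧
    β 1 = (q - 1) / (2 * q) ∧
    (∀ n : ℕ, 2 ≤ n → β n = -((q - 1) / (2 * q)) * G n) := by
  have hF := qFact_ne_aux q hq
  have hF0 : qFact q 0 = 1 := by simp [qFact]
  have hF1 : qFact q 1 = 1 := by simp [qFact, qInt]
  have hq1' : q - 1 ≠ 0 := sub_ne_zero.mpr hq1
  have h2 : (2 : K) ≠ 0 := two_ne_zero
  have hS0 : ∑ k ∈ Finset.range (0 + 1), qChoose q 0 k * G k = 0 := by simp [hG0]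
  have hS1 : ∑ k ∈ Finset.range (1 + 1), qChoose q 1 k * G k = 1 := by
    simp [Finset.sum_range_succ, hG0, hG1, qChoose, hF0, hF1]
  have hAE := coeff_AE_aux q hq G
  set A : PowerSeries K := PowerSeries.mk (fun n => G n / qFact q n) with hA
  set E : PowerSeries K := PowerSeries.mk (fun n => 1 / qFact q n) with hE
  set Aq : PowerSeries K := PowerSeries.mk (fun n => G n * q ^ n / qFact q n) with hAq
  set B : PowerSeries K := PowerSeries.mk (fun n => β n / qFact q n) with hB
  set L : PowerSeries K := PowerSeries.mk (fun n => α n / qFact q n) with hL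
  set T : PowerSeries K :=
    PowerSeries.mk (fun n => if n = 0 then (0 : K) else G n / qFact q (n - 1)) with hT
  have e1 : A * (E + 1) = PowerSeries.C 2 * PowerSeries.X := by
    ext n
    rw [mul_add, mul_one, map_add, hAE n, hA, PowerSeries.coeff_mk, PowerSeries.coeff_C_mul,
      PowerSeries.coeff_X]
    rcases n with _ | _ | n
    · rw [hS0]; simp [hG0]
    · rw [zero_add, hS1, hG1, hF1]; norm_num
    · rw [← add_div, add_comm, hG (n + 1 + 1) (by omega)]; simp
  have eAq : PowerSeries.rescale q A = Aq := by
    ext n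
    simp only [hA, hAq, PowerSeries.coeff_rescale, PowerSeries.coeff_mk]; ring
  have e2 : Aq * (PowerSeries.rescale q E + 1) =
      PowerSeries.C 2 * (PowerSeries.C q * PowerSeries.X) := by
    have := congrArg (PowerSeries.rescale q) e1
    rw [map_mul, map_add, map_one, eAq, map_mul, PowerSeries.rescale_X] at this
    rw [this]
    congr 1
    ext n
    rw [PowerSeries.coeff_rescale, PowerSeries.coeff_C]
    split_ifs with h <;> simp [h]
  have e3 : PowerSeries.rescale q E = E + PowerSeries.C (q - 1) * (PowerSeries.X * E) := by
    ext n
    rw [map_add, PowerSeries.coeff_C_mul, PowerSeries.coeff_rescale]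
    rcases n with _ | n
    · simp
    · rw [PowerSeries.coeff_succ_X_mul]
      simp only [hE, PowerSeries.coeff_mk]
      have h := qInt_mul_aux q (n + 1)
      have h3 := hF n
      have h4 := hq (n + 1) (by omega)
      rw [qFact_succ_aux]
      field_simp
      linear_combination -h
  have e4 : PowerSeries.C (q - 1) * T = Aq - A := by
    ext n
    rw [PowerSeries.coeff_C_mul, map_sub]
    simp only [hT, hA, hAq, PowerSeries.coeff_mk]
    rcases n with _ | n
    · simp [hG0]
    · have h := qInt_mul_aux q (n + 1)
      have h3 := hF n
      have h4 := hq (n + 1) (by omega)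
      rw [qFact_succ_aux]
      simp only [Nat.add_eq_zero_iff, one_ne_zero, and_false, if_false, Nat.add_sub_cancel]
      field_simp
      linear_combination G (n + 1) * h
  have hAq0 : Aq ≠ 0 := by
    intro h
    have := congrArg (PowerSeries.coeff 1) h
    simp [hAq, hG1, hF1, hq0] at this
  have hEq0 : PowerSeries.rescale q E + 1 ≠ 0 := by
    intro h
    have := congrArg (PowerSeries.coeff 0) h
    rw [map_add, PowerSeries.coeff_rescale, hE, PowerSeries.coeff_mk, hF0] at this
    norm_num at this
  have e5 : PowerSeries.C 2 * PowerSeries.C q * B =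
      PowerSeries.C 2 + PowerSeries.C (q - 1) * (A * E) := by
    apply mul_right_cancel₀ hAq0
    apply mul_right_cancel₀ hEq0
    linear_combination (-PowerSeries.C 2 * PowerSeries.C q * (PowerSeries.rescale q E + 1)) * hβ
      + (PowerSeries.C 2 * PowerSeries.C q) * e1
      - (PowerSeries.C 2 + PowerSeries.C (q - 1) * (A * E)) * e2
      + PowerSeries.C 2 * PowerSeries.C q * A * e3
  have e6 : PowerSeries.C (q - 1) * L = 1 - B := by
    apply mul_right_cancel₀ hAq0
    linear_combination e4 - PowerSeries.C (q - 1) * hα - hβ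
  have cB : ∀ n, 2 * q * β n = (if n = 0 then 2 else 0) +
      (q - 1) * ∑ k ∈ Finset.range (n + 1), qChoose q n k * G k := by
    intro n
    have h := congrArg (PowerSeries.coeff n) e5
    rw [mul_assoc, PowerSeries.coeff_C_mul, PowerSeries.coeff_C_mul, map_add,
      PowerSeries.coeff_C_mul, hAE n, PowerSeries.coeff_C, hB, PowerSeries.coeff_mk] at h
    have h3 := hF n
    split_ifs at h ⊢ with h0
    · subst h0
      rw [hF0] at h
      linear_combination h
    · field_simp at h
      linear_combination h
  have cL : ∀ n, (q - 1) * α n = (if n = 0 then 1 else 0) - β n := by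
    intro n
    have h := congrArg (PowerSeries.coeff n) e6
    rw [PowerSeries.coeff_C_mul, map_sub, PowerSeries.coeff_one, hB, hL, PowerSeries.coeff_mk,
      PowerSeries.coeff_mk] at h
    have h3 := hF n
    split_ifs at h ⊢ with h0
    · subst h0
      rw [hF0] at h
      linear_combination h
    · field_simp at h
      linear_combination h
  have b0 : β 0 = 1 / q := by
    have h := cB 0
    rw [hS0, if_pos rfl] at h
    field_simp
    apply mul_left_cancel₀ h2
    linear_combination h
  have bn : ∀ n : ℕ, 1 ≤ n →
      β n = ((q - 1) / (2 * q)) * ∑ k ∈ Finset.range (n + 1), qChoose q n k * G k := by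
    intro n hn
    have h := cB n
    rw [if_neg (by omega)] at h
    field_simp
    linear_combination h
  have a0 : α 0 = 1 / q := by
    have h := cL 0
    rw [if_pos rfl, b0] at h
    apply mul_left_cancel₀ hq1'
    rw [h]; field_simp
  have an : ∀ n : ℕ, 1 ≤ n →
      α n = -(1 / (2 * q)) * ∑ k ∈ Finset.range (n + 1), qChoose q n k * G k := by
    intro n hn
    have h := cL n
    rw [if_neg (by omega), bn n hn] at h
    apply mul_left_cancel₀ hq1'
    rw [h]; ring
  refine ⟨a0, an, ?_, ?_, b0, bn, ?_, ?_⟩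
  · rw [an 1 le_rfl, hS1, mul_one]
  · intro n hn
    rw [an n (by omega), eq_neg_of_add_eq_zero_right (hG n hn)]; ring
  · rw [bn 1 le_rfl, hS1, mul_one]
  · intro n hn
    rw [bn n (by omega), eq_neg_of_add_eq_zero_right (hG n hn)]; ring
end
end

section
/- (Recurrence relation for 2D q-Genocchi polynomials.) For every n ≥ 1 the following identity of polynomials in x, y holds: [n]_q · G_{n,q}(qx,y) = q^{n−1} G_{n,q}(x,y) + [n]_q q^{n} x · G_{n−1,q}(x,y) + Σ_{k=1}^{n} [n choose k]_q q^{n−k} (α_k^G + [k]_q β_{k−1}^G y) G_{n−k,q}(x,y), where G_{n,q}(qx,y) denotes the polynomial obtained from G_{n,q}(x,y) by substituting qx for x. -/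
noncomputable section

open Finset MvPolynomial

section Helpers

variable {K : Type*} [Field K]

theorem qInt_succ_sub (q : K) (n : ℕ) : (q - 1) * qInt q n = q ^ n - 1 := by
  unfold qInt
  rw [mul_comm]; exact geom_sum_mul q n

theorem qFact_succ' (q : K) (n : ℕ) : qFact q (n + 1) = qFact q n * qInt q (n + 1) := by
  unfold qFact
  rw [Finset.prod_range_succ]

theorem qFact_ne (q : K) (hq : ∀ n : ℕ, 1 ≤ n → qInt q n ≠ 0) (n : ℕ) : qFact q n ≠ 0 := by
  unfold qFact
  exact Finset.prod_ne_zero_iff.mpr fun k _ => hq _ (by omega)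

/-- exponential generating function of `f n * p ^ n`. -/
def egf (q : K) (f : ℕ → K) (p : MvPolynomial (Fin 2) K) :
    PowerSeries (MvPolynomial (Fin 2) K) :=
  PowerSeries.mk fun n => C (f n / qFact q n) * p ^ n

theorem coeff_egf_mul (q : K) (hq : ∀ n : ℕ, 1 ≤ n → qInt q n ≠ 0) (f : ℕ → K) (n : ℕ) :
    PowerSeries.coeff n (egf q (fun _ => 1) 1 * egf q f 1) =
      C ((∑ j ∈ Finset.range (n + 1), qChoose q n j * f j) / qFact q n) := by
  rw [mul_comm, PowerSeries.coeff_mul, Finset.Nat.sum_antidiagonal_eq_sum_range_succ_mk,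
    Finset.sum_div, map_sum]
  refine Finset.sum_congr rfl fun j hj => ?_
  simp only [egf, PowerSeries.coeff_mk, one_pow, mul_one, qChoose]
  rw [← C_mul]
  have h1 := qFact_ne q hq n
  have h2 := qFact_ne q hq j
  have h3 := qFact_ne q hq (n - j)
  congr 1
  field_simp

theorem coeff_appell (q : K) (hq : ∀ n : ℕ, 1 ≤ n → qInt q n ≠ 0) (a : ℕ → K) (n : ℕ) :
    PowerSeries.coeff n (egf q a 1 * (egf q (fun _ => 1) (X 0) *
      egf q (fun k => q ^ (k * (k - 1) / 2)) (X 1))) = C (1 / qFact q n) * appell q a n := by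
  rw [PowerSeries.coeff_mul, Finset.Nat.sum_antidiagonal_eq_sum_range_succ_mk]
  unfold appell
  rw [Finset.mul_sum]
  refine Finset.sum_congr rfl fun i hi => ?_
  have hi' : i ≤ n := by simpa [Nat.lt_succ_iff] using hi
  rw [PowerSeries.coeff_mul, Finset.Nat.sum_antidiagonal_eq_sum_range_succ_mk, Finset.mul_sum,
    Finset.mul_sum]
  have : (n - i).succ = n + 1 - i := by omega
  rw [this]
  refine Finset.sum_congr rfl fun j hj => ?_
  simp only [egf, PowerSeries.coeff_mk, one_pow, mul_one]
  rw [monomial_eq, Finsupp.prod_fintype _ _ (by simp)]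
  have h1 := qFact_ne q hq n
  have h2 := qFact_ne q hq i
  have h3 := qFact_ne q hq j
  have h4 := qFact_ne q hq (n - i - j)
  simp only [Fin.prod_univ_two, Finsupp.add_apply, Finsupp.single_apply]
  simp only [if_true, one_ne_zero, zero_ne_one, if_false, add_zero, zero_add]
  have : C (qFact q n / (qFact q i * qFact q j * qFact q (n - i - j)) * a i *
        q ^ ((n - i - j) * (n - i - j - 1) / 2)) = C (σ := Fin 2) (qFact q n) * (C (a i / qFact q i) *
        (C (1 / qFact q j) * C (q ^ ((n - i - j) * (n - i - j - 1) / 2) / qFact q (n - i - j)))) := by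
    simp only [← C_mul]
    congr 1
    field_simp
  rw [this]
  have h5 : C (1 / qFact q n) * C (σ := Fin 2) (qFact q n) = 1 := by
    rw [← C_mul, one_div_mul_cancel h1, C_1]
  linear_combination (-(C (a i / qFact q i) *
        (C (1 / qFact q j) * C (q ^ ((n - i - j) * (n - i - j - 1) / 2) / qFact q (n - i - j)))
        * (X 0 ^ j * X 1 ^ (n - i - j)))) * h5

theorem rescale_e (q : K) (hq : ∀ n : ℕ, 1 ≤ n → qInt q n ≠ 0) (p : MvPolynomial (Fin 2) K) :
    PowerSeries.rescale (C q) (egf q (fun _ => 1) p) =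
      (1 + PowerSeries.C (C (q - 1) * p) * PowerSeries.X) * egf q (fun _ => 1) p := by
  ext1 n
  rw [add_mul, one_mul, map_add, mul_assoc, PowerSeries.coeff_C_mul, PowerSeries.coeff_rescale]
  cases n with
  | zero => simp [egf]
  | succ n =>
    rw [PowerSeries.coeff_succ_X_mul]
    simp only [egf, PowerSeries.coeff_mk]
    have h1 := qFact_ne q hq n
    have h2 := hq (n + 1) (by omega)
    have h3 := qInt_succ_sub q (n + 1)
    have key : C (σ := Fin 2) (q ^ (n+1) * (1 / qFact q (n + 1))) =
        C (1 / qFact q (n + 1) + (q - 1) * (1 / qFact q n)) := by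
      congr 1
      rw [qFact_succ']
      field_simp
      linear_combination -h3
    simp only [C_mul, C_add, C_pow] at key
    linear_combination p ^ (n+1) * key

theorem rescale_E (q : K) (hq : ∀ n : ℕ, 1 ≤ n → qInt q n ≠ 0) (p : MvPolynomial (Fin 2) K) :
    egf q (fun k => q ^ (k * (k - 1) / 2)) p =
      (1 - PowerSeries.C (C (q - 1) * p) * PowerSeries.X) *
        PowerSeries.rescale (C q) (egf q (fun k => q ^ (k * (k - 1) / 2)) p) := by
  ext1 n
  rw [sub_mul, one_mul, map_sub, mul_assoc, PowerSeries.coeff_C_mul, PowerSeries.coeff_rescale]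
  cases n with
  | zero => simp [egf]
  | succ n =>
    rw [PowerSeries.coeff_succ_X_mul, PowerSeries.coeff_rescale]
    simp only [egf, PowerSeries.coeff_mk]
    have h1 := qFact_ne q hq n
    have h2 := hq (n + 1) (by omega)
    have h3 := qInt_succ_sub q (n + 1)
    have h4 : (n + 1) * (n + 1 - 1) / 2 = n * (n - 1) / 2 + n := by
      rw [← Finset.sum_range_id_mul_two (n+1), ← Finset.sum_range_id_mul_two n,
        Nat.mul_div_cancel _ (by norm_num), Nat.mul_div_cancel _ (by norm_num),
        Finset.sum_range_succ]
    have key : C (σ := Fin 2) (q ^ ((n + 1) * (n + 1 - 1) / 2) / qFact q (n + 1)) =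
        C (q ^ (n+1) * (q ^ ((n + 1) * (n + 1 - 1) / 2) / qFact q (n + 1))
          - (q - 1) * (q ^ n * (q ^ (n * (n - 1) / 2) / qFact q n))) := by
      congr 1
      rw [qFact_succ', h4, pow_add]
      field_simp
      linear_combination q ^ (n * (n - 1) / 2) * q ^ n * h3
    simp only [C_mul, C_sub, C_pow] at key
    simp only [C_sub]
    linear_combination p ^ (n+1) * key

end Helpers

/-- Recurrence relation for 2D `q`-Genocchi polynomials. -/
theorem qGenocchi2D_recurrence
    {K : Type*} [Field K] [CharZero K] (q : K) (hq0 : q ≠ 0) (hq1 : q ≠ 1)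
    (hq : ∀ n : ℕ, 1 ≤ n → qInt q n ≠ 0)
    (G : ℕ → K) (hG0 : G 0 = 0) (hG1 : G 1 = 1)
    (hG : ∀ n : ℕ, 2 ≤ n → G n + ∑ k ∈ Finset.range (n + 1), qChoose q n k * G k = 0)
    (αG βG : ℕ → K)
    (hαG : ∀ k : ℕ, 1 ≤ k →
      αG k = -(1 / (2 * q)) * ∑ j ∈ Finset.range (k + 1), qChoose q k j * G j)
    (hβG0 : βG 0 = 1 / q)
    (hβG : ∀ m : ℕ, 1 ≤ m →
      βG m = ((q - 1) / (2 * q)) * ∑ j ∈ Finset.range (m + 1), qChoose q m j * G j)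
    (n : ℕ) (hn : 1 ≤ n) :
    C (qInt q n) * substX q (appell q G n) =
      C (q ^ (n - 1)) * appell q G n +
      (∑ k ∈ Finset.Icc 1 n, C (qChoose q n k * q ^ (n - k)) *
        (C (αG k) + C (qInt q k * βG (k - 1)) * X 1) * appell q G (n - k)) +
      C (qInt q n * q ^ n) * X 0 * appell q G (n - 1) := by
  classical
  let cc : K → PowerSeries (MvPolynomial (Fin 2) K) := fun a => PowerSeries.C (C a)
  have cc_mul : ∀ a b, cc (a * b) = cc a * cc b := fun a b => by simp [cc]
  have cc_add : ∀ a b, cc (a + b) = cc a + cc b := fun a b => by simp [cc]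
  have cc_sub : ∀ a b, cc (a - b) = cc a - cc b := fun a b => by simp [cc]
  have cc_one : cc 1 = 1 := by simp [cc]
  have hF := qFact_ne q hq
  have hF0 : qFact q 0 = 1 := by simp [qFact]
  have hI1 : qInt q 1 = 1 := by simp [qInt]
  have hF1 : qFact q 1 = 1 := by simp [qFact, hI1]
  set E1 := egf q (fun _ => 1) 1 with hE1
  set A := egf q G 1 with hA
  set ex := egf q (fun _ => 1) (X 0) with hex
  set Ey := egf q (fun k => q ^ (k * (k - 1) / 2)) (X 1) with hEy
  have hEA := coeff_egf_mul q hq G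
  rw [← hE1, ← hA] at hEA
  have hAe : A * (1 + E1) = cc 2 * PowerSeries.X := by
    rw [mul_add, mul_one, mul_comm A E1]
    ext1 m
    rw [map_add, hEA m, PowerSeries.coeff_C_mul, PowerSeries.coeff_X, hA, egf,
      PowerSeries.coeff_mk, one_pow, mul_one, ← C_add, ← add_div]
    rcases m with _ | _ | m
    · simp [hG0]
    · simp [Finset.sum_range_succ, hG0, hG1, qChoose, hF0, hF1]
      rw [← C_1, ← C_add]; norm_num
    · rw [hG (m + 1 + 1) (by omega)]
      simp
  let r := PowerSeries.rescale (C (σ := Fin 2) q)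
  have r_cc : ∀ a, r (cc a) = cc a := fun a => by
    simp only [r, cc]
    ext1 m
    rw [PowerSeries.coeff_rescale, PowerSeries.coeff_C]
    split_ifs with h
    · simp [h]
    · simp
  have r_CX : ∀ p, r (PowerSeries.C p * PowerSeries.X) =
      cc q * (PowerSeries.C p * PowerSeries.X) := fun p => by
    simp only [r, cc]
    ext1 m
    rw [PowerSeries.coeff_rescale, PowerSeries.coeff_C_mul, PowerSeries.coeff_C_mul,
      PowerSeries.coeff_C_mul, PowerSeries.coeff_X]
    split_ifs with h
    · simp [h]
    · simp
  have hrE1 : r E1 = (1 + cc (q - 1) * PowerSeries.X) * E1 := by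
    have := rescale_e q hq 1
    rw [mul_one] at this
    exact this
  have hrA : r A * (1 + r E1) = cc q * (cc 2 * PowerSeries.X) := by
    have := congrArg r hAe
    rwa [map_mul, map_add, map_one, r_CX] at this
  have h2 : (2 : K) ≠ 0 := two_ne_zero
  have hne : (1 + E1) ≠ 0 := by
    intro h
    have := congrArg (PowerSeries.coeff 0) h
    rw [map_add, hE1, egf, PowerSeries.coeff_mk, hF0] at this
    simp at this
  have hhalf : cc ((q - 1) / 2) * cc 2 = cc (q - 1) := by
    rw [← cc_mul, div_mul_cancel₀ _ h2]
  have hR : cc q * A = (1 + cc ((q - 1) / 2) * (E1 * A)) * r A := by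
    apply mul_right_cancel₀ hne
    rw [hrE1] at hrA
    linear_combination (cc q - cc ((q - 1) / 2) * E1 * r A) * hAe - hrA
      - (E1 * PowerSeries.X * r A) * hhalf
  let al := cc (1 / q) - cc (1 / (2 * q)) * (E1 * A)
  let be := cc (1 / q) + cc ((q - 1) / (2 * q)) * (E1 * A)
  have hbe : A = be * r A := by
    have h1 : cc (1 / q) * cc q = 1 := by rw [← cc_mul, one_div_mul_cancel hq0, cc_one]
    have h3 : cc ((q - 1) / (2 * q)) = cc (1 / q) * cc ((q - 1) / 2) := by
      rw [← cc_mul]; congr 1; field_simp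
    simp only [be]
    rw [h3]
    linear_combination cc (1 / q) * hR - A * h1
  have hal : 1 - be = cc (q - 1) * al := by
    have h1 : cc (q - 1) * cc (1 / q) = 1 - cc (1 / q) := by
      rw [← cc_mul, ← cc_one, ← cc_sub]; congr 1; field_simp
    have h3 : cc ((q - 1) / (2 * q)) = cc (q - 1) * cc (1 / (2 * q)) := by
      rw [← cc_mul]; congr 1; field_simp
    simp only [be, al]
    rw [h3]
    linear_combination -h1
  let xt : PowerSeries (MvPolynomial (Fin 2) K) := PowerSeries.C (X 0) * PowerSeries.X
  let yt : PowerSeries (MvPolynomial (Fin 2) K) := PowerSeries.C (X 1) * PowerSeries.X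
  have hrex : r ex = (1 + cc (q - 1) * xt) * ex := by
    have := rescale_e q hq (X 0)
    rw [map_mul, mul_assoc (PowerSeries.C (C (q - 1)))] at this
    exact this
  have hrrex : r (r ex) = (1 + cc (q - 1) * (cc q * xt)) * r ex := by
    conv_lhs => rw [hrex]
    rw [map_mul, map_add, map_one, map_mul, r_cc, r_CX]
  have hrEy : Ey = (1 - cc (q - 1) * yt) * r Ey := by
    have := rescale_E q hq (X 1)
    rw [map_mul, mul_assoc (PowerSeries.C (C (q - 1)))] at this
    exact this
  have hmain : r (A * (r ex * Ey)) - A * (r ex * Ey) =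
      cc (q - 1) * ((al + yt * be) * r (A * (ex * Ey)) + cc q * xt * r (A * (ex * Ey))) := by
    have e1 : A * (r ex * Ey) = be * r A * (r ex * ((1 - cc (q - 1) * yt) * r Ey)) := by
      rw [← hbe, ← hrEy]
    rw [map_mul, map_mul, hrrex, e1, map_mul, map_mul]
    linear_combination (r A * r ex * r Ey) * hal
  have hmap : ∀ m, PowerSeries.coeff m (A * (r ex * Ey)) =
      C (1 / qFact q m) * substX q (appell q G m) := by
    intro m
    let φ : MvPolynomial (Fin 2) K →ₐ[K] MvPolynomial (Fin 2) K :=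
      aeval (fun i : Fin 2 => if i = 0 then C q * X 0 else X 1)
    have hφC : ∀ a, φ (C a) = C a := fun a => by
      simp only [φ, aeval_C]; rfl
    have hφ : ∀ (f : ℕ → K) (p : MvPolynomial (Fin 2) K),
        PowerSeries.map (φ : MvPolynomial (Fin 2) K →+* MvPolynomial (Fin 2) K) (egf q f p)
          = egf q f (φ p) := by
      intro f p
      ext1 k
      rw [PowerSeries.coeff_map, egf, egf, PowerSeries.coeff_mk, PowerSeries.coeff_mk]
      simp [hφC]
    have h0 : egf q (fun _ => 1) (φ (X 0)) = r ex := by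
      ext1 k
      simp only [r, hex, egf, PowerSeries.coeff_rescale, PowerSeries.coeff_mk, φ, aeval_X, if_true]
      ring
    have h1 : φ (X 1) = X 1 := by simp [φ]
    have := congrArg φ (coeff_appell q hq G m)
    rw [map_mul φ, hφC] at this
    change _ = C (1 / qFact q m) * φ (appell q G m)
    rw [← this]
    have h3 := PowerSeries.coeff_map (φ : MvPolynomial (Fin 2) K →+* MvPolynomial (Fin 2) K) m
      (A * (ex * Ey))
    rw [map_mul (PowerSeries.map _), map_mul (PowerSeries.map _), hA, hex, hEy, hφ, hφ, hφ, h0, h1, map_one] at h3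
    exact h3
  have hcoef : ∀ k, 1 ≤ k → PowerSeries.coeff k (al + yt * be) =
      C (1 / qFact q k) * (C (αG k) + C (qInt q k * βG (k - 1)) * X 1) := by
    intro k hk
    obtain ⟨m, rfl⟩ : ∃ m, k = m + 1 := ⟨k - 1, by omega⟩
    have hbm : PowerSeries.coeff m be = C (1 / qFact q m * βG m) := by
      simp only [be, cc]
      rw [map_add, PowerSeries.coeff_C_mul, hEA, PowerSeries.coeff_C]
      split_ifs with h
      · subst h
        simp [hG0, hβG0, hF0]
      · rw [hβG m (by omega), zero_add, ← C_mul]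
        congr 1
        ring
    have ham : PowerSeries.coeff (m + 1) al = C (1 / qFact q (m + 1) * αG (m + 1)) := by
      simp only [al, cc]
      rw [map_sub, PowerSeries.coeff_C_mul, hEA, PowerSeries.coeff_C, if_neg (by omega),
        hαG _ hk, zero_sub, ← C_mul, ← C_neg]
      congr 1
      ring
    have hq1' := hq (m + 1) (by omega)
    have hFm := hF m
    have hs : (1 / qFact q m * βG m) = 1 / qFact q (m + 1) * (qInt q (m + 1) * βG m) := by
      rw [qFact_succ']
      field_simp
    rw [map_add, ham]
    simp only [yt]
    rw [mul_assoc, PowerSeries.coeff_C_mul, PowerSeries.coeff_succ_X_mul, hbm, hs, C_mul, C_mul,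
      Nat.add_sub_cancel]
    ring
  have hcoef0 : PowerSeries.coeff 0 (al + yt * be) = C (1 / q) := by
    simp only [yt]
    rw [map_add, mul_assoc, PowerSeries.coeff_C_mul, PowerSeries.coeff_zero_X_mul]
    simp only [al, cc]
    rw [map_sub, PowerSeries.coeff_C_mul, hEA, PowerSeries.coeff_C]
    simp [hG0]
  have hP : ∀ m, PowerSeries.coeff m (r (A * (ex * Ey))) =
      C (q ^ m * (1 / qFact q m)) * appell q G m := by
    intro m
    simp only [r]
    rw [PowerSeries.coeff_rescale, coeff_appell q hq G m, C_mul, C_pow, mul_assoc]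
  have hn' := congrArg (PowerSeries.coeff n) hmain
  obtain ⟨m, rfl⟩ : ∃ m, n = m + 1 := ⟨n - 1, by omega⟩
  have hlhs : PowerSeries.coeff (m + 1) (r (A * (r ex * Ey))) =
      C (q ^ (m + 1)) * (C (1 / qFact q (m + 1)) * substX q (appell q G (m + 1))) := by
    simp only [r]
    rw [PowerSeries.coeff_rescale]
    rw [← hmap, C_pow]
  have hxt : PowerSeries.coeff (m + 1) (cc q * xt * r (A * (ex * Ey))) =
      C q * (X 0 * (C (q ^ m * (1 / qFact q m)) * appell q G m)) := by
    simp only [xt, cc]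
    rw [mul_assoc, mul_assoc, PowerSeries.coeff_C_mul, PowerSeries.coeff_C_mul,
      PowerSeries.coeff_succ_X_mul, hP]
  have hsum : PowerSeries.coeff (m + 1) ((al + yt * be) * r (A * (ex * Ey))) =
      C (1 / qFact q (m + 1)) * (C (q ^ m) * appell q G (m + 1) +
      (∑ k ∈ Finset.Icc 1 (m + 1), C (qChoose q (m + 1) k * q ^ (m + 1 - k)) *
        (C (αG k) + C (qInt q k * βG (k - 1)) * X 1) * appell q G (m + 1 - k))) := by
    rw [PowerSeries.coeff_mul, Finset.Nat.sum_antidiagonal_eq_sum_range_succ_mk,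
      Finset.sum_range_succ', add_comm, mul_add (C (1 / qFact q (m + 1)))]
    congr 1
    · simp only
      rw [hcoef0, Nat.sub_zero, hP, ← mul_assoc, ← mul_assoc, ← C_mul, ← C_mul]
      congr 2
      field_simp
      ring
    · rw [← Finset.Ico_add_one_right_eq_Icc, Finset.sum_Ico_eq_sum_range, Finset.mul_sum]
      simp only [Nat.add_sub_cancel]
      refine Finset.sum_congr rfl fun k _ => ?_
      rw [add_comm 1 k, hcoef (k + 1) (by omega), hP]
      have : C (1 / qFact q (k + 1)) * C (σ := Fin 2)
            (q ^ (m + 1 - (k + 1)) * (1 / qFact q (m + 1 - (k + 1)))) =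
          C (1 / qFact q (m + 1)) *
            C (qChoose q (m + 1) (k + 1) * q ^ (m + 1 - (k + 1))) := by
        rw [← C_mul, ← C_mul, qChoose]
        congr 1
        have h1 := hF (m + 1)
        have h2 := hF (k + 1)
        have h3 := hF (m + 1 - (k + 1))
        field_simp
      rw [Nat.add_sub_cancel]
      linear_combination (C (αG (k + 1)) + C (qInt q (k + 1) * βG k) * X 1) *
        appell q G (m + 1 - (k + 1)) * this
  have hcf : ∀ (a : K) (f : PowerSeries (MvPolynomial (Fin 2) K)),
      PowerSeries.coeff (m + 1) (cc a * f) = C a * PowerSeries.coeff (m + 1) f :=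
    fun a f => PowerSeries.coeff_C_mul _ _ _
  rw [map_sub, hlhs, hmap, hcf, map_add, hxt, hsum] at hn'
  rw [Nat.add_sub_cancel]
  have hc : C (σ := Fin 2) ((q - 1) * (1 / qFact q (m + 1))) ≠ 0 := by
    rw [Ne, C_eq_zero]
    exact mul_ne_zero (sub_ne_zero.mpr hq1) (one_div_ne_zero (hF _))
  apply mul_left_cancel₀ hc
  have k1 : C (σ := Fin 2) (q - 1) * C (qInt q (m + 1)) = C (q ^ (m + 1)) - 1 := by
    rw [← C_mul, qInt_succ_sub, C_sub, C_1]
  have k2 : C (σ := Fin 2) q * C (q ^ m * (1 / qFact q m)) =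
      C (1 / qFact q (m + 1)) * C (qInt q (m + 1) * q ^ (m + 1)) := by
    rw [← C_mul, ← C_mul, qFact_succ']
    congr 1
    have h1 := hF m
    have h2 := hq (m + 1) (by omega)
    field_simp
    ring
  rw [C_mul]
  linear_combination hn' + (C (1 / qFact q (m + 1)) * substX q (appell q G (m + 1))) * k1 +
    C (q - 1) * X 0 * appell q G m * k2
end
end
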